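/- Fix an integer N ≥ 0 and scalars D_1, …, D_N ∈ K. With the modes and conventions of the context (Z₂-twisted bosons b_r, r ∈ ℤ+1/2, and untwisted fermions ψ_r, r ∈ ℤ+1/2), define for each integer i ≥ 1: H_i = ℏ ∂_{x^i} + (ℏ/2) Σ_{r∈ℤ+1/2} :b_r b_{i+N−1−r}: + (ℏ/2) Σ_{r∈ℤ+1/2} (r + (i+N−1)/2) :ψ_{−r} ψ_{i+N−1+r}: + ℏ D_i [i ≤ N], and F_i = ℏ ∂_{θ^i} + ℏ Σ_{r∈ℤ+1/2} b_{i+N−1−r} ψ_r. Then these operators form a representation of a subalgebra of the N=1 super Virasoro algebra in the Ramond sector: for all integers i, j ≥ 1, [H_i, H_j] = ℏ (i−j) H_{i+j+N−1}, [H_i, F_j] = ℏ ((i−N+1)/2 − j) F_{i+j+N−1}, and {F_i, F_j} = 2ℏ H_{i+j+N−1}. -/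

import Mathlib

/-!
Statement 8: the σ-twisted free boson–fermion representation of a subalgebra of the N=1
super Virasoro algebra in the Ramond sector. Twisted bosons `b_r`, `r ∈ ℤ+1/2`, act on
`P = K[t,t⁻¹][x¹,x²,…]` (with `ℏ = t²`, `√ℏ = t`), untwisted fermions `ψ_r`,
`r ∈ ℤ+1/2`, act on `Λ(θ¹,θ²,…)`; a half-integer index `r = n + 1/2 ∈ ℤ + 1/2` is
parametrised by `n ∈ ℤ` throughout.
-/

set_option synthInstance.maxHeartbeats 1000000
set_option maxHeartbeats 1000000

noncomputable section
open TensorProduct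

variable (K : Type) [Field K] [CharZero K]

/-- `R = K[t,t⁻¹]`, with `ℏ = t²`, `√ℏ = t`. -/
abbrev R := LaurentPolynomial K
/-- `ℏ = t² ∈ R`. -/
def hb : R K := LaurentPolynomial.T 2
/-- A scalar `c : K` viewed in `R`. -/
def cs (c : K) : R K := LaurentPolynomial.C c
/-- The even part `P = R[x¹,x²,x³,…]`; variables are indexed by `ℕ+`. -/
abbrev Pev := MvPolynomial ℕ+ (R K)
/-- The odd part `Λ(θ¹,θ²,…)`; generators are indexed by `ℕ+`. -/
abbrev Podd := ExteriorAlgebra (R K) (ℕ+ →₀ R K)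
/-- The full carrier `S = P ⊗_R Λ`. -/
abbrev SuperSpace := Pev K ⊗[R K] Podd K

/-- `∂_{x^a}`, acting through the polynomial factor. -/
def dX (a : ℕ+) : SuperSpace K → SuperSpace K :=
  LinearMap.rTensor (Podd K) (MvPolynomial.pderiv a).toLinearMap

/-- Multiplication by `x^a`, acting through the polynomial factor. -/
def mX (a : ℕ+) : SuperSpace K → SuperSpace K :=
  LinearMap.rTensor (Podd K) (LinearMap.mulLeft (R K) (MvPolynomial.X a))

/-- `∂_{θ^a}` (interior product with the dual basis vector), acting through the odd factor. -/
def dT (a : ℕ+) : SuperSpace K → SuperSpace K :=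
  LinearMap.lTensor (Pev K) (CliffordAlgebra.contractLeft (Finsupp.lapply a))

/-- Left multiplication by `θ^a`, acting through the odd factor. -/
def mT (a : ℕ+) : SuperSpace K → SuperSpace K :=
  LinearMap.lTensor (Pev K)
    (LinearMap.mulLeft (R K) (ExteriorAlgebra.ι (R K) (Finsupp.single a 1)))

/-- `∂_{x^a}` for `a ∈ ℤ`, vanishing for `a < 1`. -/
def dXi (a : ℤ) : SuperSpace K → SuperSpace K :=
  fun v => if h : 1 ≤ a then dX K ⟨a.toNat, by omega⟩ v else 0

/-- `∂_{θ^a}` for `a ∈ ℤ`, vanishing for `a < 1`. -/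
def dTi (a : ℤ) : SuperSpace K → SuperSpace K :=
  fun v => if h : 1 ≤ a then dT K ⟨a.toNat, by omega⟩ v else 0

/-- The σ-twisted boson mode `b_{n+1/2}`: `b_r = √ℏ ∂_{x^{r+1/2}}` and
`b_{−r} = (r/√ℏ) x^{r+1/2}` for `r ∈ ℤ_{≥0}+1/2`. -/
def bos (n : ℤ) : SuperSpace K → SuperSpace K :=
  if h : 0 ≤ n then fun v => (LaurentPolynomial.T 1 : R K) • dX K ⟨(n + 1).toNat, by omega⟩ v
  else fun v =>
    ((((-2 * n - 1 : ℤ) : R K) * cs K (2 : K)⁻¹) * LaurentPolynomial.T (-1)) •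
      mX K ⟨(-n).toNat, by omega⟩ v

/-- The untwisted Neveu–Schwarz fermion mode `ψ_{n+1/2}`:
`ψ_r = √ℏ ∂_{θ^{r+1/2}}` and `ψ_{−r} = (1/√ℏ) θ^{r+1/2}` for `r ∈ ℤ_{≥0}+1/2`. -/
def fer (n : ℤ) : SuperSpace K → SuperSpace K :=
  if h : 0 ≤ n then fun v => (LaurentPolynomial.T 1 : R K) • dT K ⟨(n + 1).toNat, by omega⟩ v
  else fun v => (LaurentPolynomial.T (-1) : R K) • mT K ⟨(-n).toNat, by omega⟩ v

/-- The normally ordered boson bilinear `:b_{n+1/2} b_{m+1/2}:`. -/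
def nb (n m : ℤ) : SuperSpace K → SuperSpace K :=
  if n ≤ m then fun v => bos K n (bos K m v) else fun v => bos K m (bos K n v)

/-- The normally ordered fermion bilinear `:ψ_{n+1/2} ψ_{m+1/2}:`. -/
def nf (n m : ℤ) : SuperSpace K → SuperSpace K :=
  if n ≤ m then fun v => fer K n (fer K m v) else fun v => -(fer K m (fer K n v))

/-- `H_i = ℏ ∂_{x^i} + (ℏ/2) Σ_{r∈ℤ+1/2} :b_r b_{i+N−1−r}:
        + (ℏ/2) Σ_{r∈ℤ+1/2} (r + (i+N−1)/2) :ψ_{−r} ψ_{i+N−1+r}: + ℏ D_i [i ≤ N]`,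
with both half-integer sums parametrised by `r = n + 1/2`, `n ∈ ℤ`. -/
def Hop (N : ℤ) (D : ℤ → K) (i : ℤ) : SuperSpace K → SuperSpace K := fun v =>
  hb K • dXi K i v
    + (cs K (2 : K)⁻¹ * hb K) • (∑ᶠ n : ℤ, nb K n (i + N - 2 - n) v)
    + (cs K (2 : K)⁻¹ * hb K) •
        (∑ᶠ n : ℤ, (((2 * n + i + N : ℤ) : R K) * cs K (2 : K)⁻¹) •
          nf K (-n - 1) (i + N - 1 + n) v)
    + (if i ≤ N then (hb K * cs K (D i)) • v else 0)

/-- `F_i = ℏ ∂_{θ^i} + ℏ Σ_{r∈ℤ+1/2} b_{i+N−1−r} ψ_r`, the half-integer sum being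
parametrised by `r = n + 1/2`, `n ∈ ℤ`. -/
def Fop (N : ℤ) (i : ℤ) : SuperSpace K → SuperSpace K := fun v =>
  hb K • dTi K i v + hb K • (∑ᶠ n : ℤ, bos K (i + N - 2 - n) (fer K n v))

section Abstract
variable {A V : Type*} [CommRing A] [AddCommGroup V] [Module A V]

/-- pointwise (locally finite) sum of a family of endomorphisms -/
def HSm (T : ℤ → Module.End A V) (S : Module.End A V) : Prop :=
  ∀ v, (Function.support fun n => T n v).Finite ∧ ∑ᶠ n, T n v = S v

theorem HSm.exists' (T : ℤ → Module.End A V)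
    (h : ∀ v, (Function.support fun n => T n v).Finite) : ∃ S, HSm T S :=
  ⟨{ toFun := fun v => ∑ᶠ n, T n v
     map_add' := fun v w => by
      simp only [map_add]
      exact finsum_add_distrib (h v) (h w)
     map_smul' := fun c v => by
      simp only [map_smul, RingHom.id_apply]
      exact (smul_finsum' c (h v)).symm }, fun v => ⟨h v, rfl⟩⟩

theorem HSm.uniq {T : ℤ → Module.End A V} {S S' : Module.End A V} (h : HSm T S) (h' : HSm T S') :
    S = S' := by
  ext v
  rw [← (h v).2, ← (h' v).2]

theorem HSm.add {T T' : ℤ → Module.End A V} {S S' : Module.End A V} (h : HSm T S)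
    (h' : HSm T' S') : HSm (fun n => T n + T' n) (S + S') := fun v => by
  refine ⟨((h v).1.union (h' v).1).subset ?_, ?_⟩
  · simpa only [LinearMap.add_apply] using Function.support_add _ _
  · simp only [LinearMap.add_apply]
    rw [finsum_add_distrib (h v).1 (h' v).1, (h v).2, (h' v).2]

theorem HSm.mul_left {T : ℤ → Module.End A V} {S : Module.End A V} (X : Module.End A V)
    (h : HSm T S) : HSm (fun n => X * T n) (X * S) := fun v => by
  refine ⟨(h v).1.subset ?_, ?_⟩
  · intro n hn
    simp only [Function.mem_support, Module.End.mul_apply] at hn ⊢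
    intro h0
    exact hn (by rw [h0, map_zero])
  · simp only [Module.End.mul_apply]
    rw [← (h v).2]
    exact (AddMonoidHom.map_finsum X.toAddMonoidHom (h v).1).symm

theorem HSm.mul_right {T : ℤ → Module.End A V} {S : Module.End A V} (X : Module.End A V)
    (h : HSm T S) : HSm (fun n => T n * X) (S * X) := fun v => h (X v)

theorem HSm.smul {T : ℤ → Module.End A V} {S : Module.End A V} (c : A)
    (h : HSm T S) : HSm (fun n => c • T n) (c • S) := by
  have := h.mul_left (c • 1)
  simpa using this

theorem HSm.neg {T : ℤ → Module.End A V} {S : Module.End A V}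
    (h : HSm T S) : HSm (fun n => - T n) (-S) := by
  have := h.smul (-1)
  simpa using this

theorem HSm.sub {T T' : ℤ → Module.End A V} {S S' : Module.End A V} (h : HSm T S)
    (h' : HSm T' S') : HSm (fun n => T n - T' n) (S - S') := by
  simpa only [sub_eq_add_neg] using h.add h'.neg

theorem HSm.reindex {T : ℤ → Module.End A V} {S : Module.End A V} (e : ℤ ≃ ℤ)
    (h : HSm T S) : HSm (fun n => T (e n)) S := fun v => by
  refine ⟨?_, ?_⟩
  · exact (h v).1.preimage e.injective.injOn
  · rw [← (h v).2]
    exact finsum_comp_equiv e (f := fun n => T n v)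

theorem HSm.single (a : ℤ) (X : Module.End A V) : HSm (fun n => if n = a then X else 0) X :=
  fun v => by
  refine ⟨(Set.finite_singleton a).subset ?_, ?_⟩
  · intro n hn
    by_contra h
    simp only [Set.mem_singleton_iff] at h
    simp [h] at hn
  · rw [finsum_eq_single _ a]
    · simp
    · intro n hn; simp [hn]

theorem HSm.congr {T T' : ℤ → Module.End A V} {S S' : Module.End A V} (h : HSm T S)
    (h' : ∀ n, T' n = T n) (hS : S' = S) : HSm T' S' := by
  rw [funext h', hS]; exact h

/-- The free field modes -/
structure FockModes (A V : Type*) [CommRing A] [AddCommGroup V] [Module A V] where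
  b : ℤ → Module.End A V
  p : ℤ → Module.End A V
  h : A
  h2 : 2 * h = 1
  bb : ∀ n m, b n * b m = b m * b n + (if n + m + 1 = 0 then ((2 * n + 1 : ℤ) : A) * h else 0) • 1
  pp : ∀ n m, p n * p m = - (p m * p n) + (if n + m + 1 = 0 then (1 : A) else 0) • 1
  pb : ∀ n m, p n * b m = b m * p n
  lf : ∀ v, ∃ B : ℤ, ∀ n, B ≤ n → b n v = 0 ∧ p n v = 0

namespace FockModes
variable (M : FockModes A V)

def nB (n m : ℤ) : Module.End A V := if n ≤ m then M.b n * M.b m else M.b m * M.b n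
def nF (n m : ℤ) : Module.End A V := if n ≤ m then M.p n * M.p m else -(M.p m * M.p n)

theorem supp_fin {f : ℤ → V} (C D : ℤ) (h1 : ∀ n, n ≤ C → f n = 0) (h2 : ∀ n, D ≤ n → f n = 0) :
    (Function.support f).Finite := by
  refine (Set.finite_Icc C D).subset fun n hn => ?_
  constructor
  · by_contra hc; exact hn (h1 n (by omega))
  · by_contra hc; exact hn (h2 n (by omega))

theorem nB_lf (m : ℤ) (v : V) : (Function.support fun n => M.nB n (m - 1 - n) v).Finite := by
  obtain ⟨B, hB⟩ := M.lf v
  refine supp_fin (-|B| - |m| - 1) (|B| + |m| + 1) ?_ ?_ <;> intro n hn <;> unfold nB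
  · have := le_abs_self B; have := neg_abs_le B; have := le_abs_self m; have := neg_abs_le m
    rw [if_pos (by omega), Module.End.mul_apply, (hB (m - 1 - n) (by omega)).1, map_zero]
  · have := le_abs_self B; have := neg_abs_le B; have := le_abs_self m; have := neg_abs_le m
    rw [if_neg (by omega), Module.End.mul_apply, (hB n (by omega)).1, map_zero]

theorem nF_lf (m : ℤ) (c : ℤ → A) (v : V) :
    (Function.support fun n => (c n • M.nF (-n - 1) (m + n)) v).Finite := by
  obtain ⟨B, hB⟩ := M.lf v
  refine supp_fin (-|B| - |m| - 1) (|B| + |m| + 1) ?_ ?_ <;> intro n hn <;> unfold nF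
  · have := le_abs_self B; have := neg_abs_le B; have := le_abs_self m; have := neg_abs_le m
    rw [if_neg (by omega), LinearMap.smul_apply, LinearMap.neg_apply, Module.End.mul_apply,
      (hB (-n-1) (by omega)).2, map_zero, neg_zero, smul_zero]
  · have := le_abs_self B; have := neg_abs_le B; have := le_abs_self m; have := neg_abs_le m
    rw [if_pos (by omega), LinearMap.smul_apply, Module.End.mul_apply,
      (hB (m + n) (by omega)).2, map_zero, smul_zero]

theorem G_lf (m : ℤ) (v : V) :
    (Function.support fun n => (M.b (m - 1 - n) * M.p n) v).Finite := by
  obtain ⟨B, hB⟩ := M.lf v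
  refine supp_fin (-|B| - |m| - 1) (|B| + |m| + 1) ?_ ?_ <;> intro n hn
  · have := le_abs_self B; have := neg_abs_le B; have := le_abs_self m; have := neg_abs_le m
    rw [← M.pb, Module.End.mul_apply, (hB _ (by omega)).1, map_zero]
  · have := le_abs_self B; have := neg_abs_le B; have := le_abs_self m; have := neg_abs_le m
    rw [Module.End.mul_apply, (hB _ (by omega)).2, map_zero]

noncomputable def LB (m : ℤ) : Module.End A V := (HSm.exists' _ (M.nB_lf m)).choose
theorem hLB (m : ℤ) : HSm (fun n => M.nB n (m - 1 - n)) (M.LB m) :=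
  (HSm.exists' _ (M.nB_lf m)).choose_spec
noncomputable def LF (m : ℤ) : Module.End A V :=
  (HSm.exists' _ (M.nF_lf m (fun n => ((2 * n + m + 1 : ℤ) : A) * M.h))).choose
theorem hLF (m : ℤ) :
    HSm (fun n => (((2 * n + m + 1 : ℤ) : A) * M.h) • M.nF (-n - 1) (m + n)) (M.LF m) :=
  (HSm.exists' _ (M.nF_lf m (fun n => ((2 * n + m + 1 : ℤ) : A) * M.h))).choose_spec
noncomputable def G (m : ℤ) : Module.End A V := (HSm.exists' _ (M.G_lf m)).choose
theorem hG (m : ℤ) : HSm (fun n => M.b (m - 1 - n) * M.p n) (M.G m) :=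
  (HSm.exists' _ (M.G_lf m)).choose_spec

noncomputable def L (m : ℤ) : Module.End A V := M.h • (M.LB m + M.LF m)

theorem half_add (X : Module.End A V) : M.h • (X + X) = X := by
  rw [← two_smul A X, smul_smul, mul_comm, M.h2, one_smul]

theorem nB_eq (n m : ℤ) : ∃ c : A, M.nB n m = M.b n * M.b m + c • 1 := by
  unfold nB
  split_ifs
  · exact ⟨0, by simp⟩
  · exact ⟨_, M.bb m n⟩

theorem nF_eq (n m : ℤ) : ∃ c : A, M.nF n m = M.p n * M.p m + c • 1 := by
  unfold nF
  split_ifs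
  · exact ⟨0, by simp⟩
  · refine ⟨-(if m + n + 1 = 0 then (1 : A) else 0), ?_⟩
    rw [M.pp m n]; module

/-- scalar-shift lemma -/
theorem LB_b (m k : ℤ) : M.LB m * M.b k - M.b k * M.LB m
    = -(((2 * k + 1 : ℤ) : A)) • M.b (m + k) := by
  have h1 := ((M.hLB m).mul_right (M.b k)).sub ((M.hLB m).mul_left (M.b k))
  have h2 := (HSm.single (-k-1) ((-(((2 * k + 1 : ℤ) : A) * M.h)) • M.b (m + k))).add
    (HSm.single (m+k) ((-(((2 * k + 1 : ℤ) : A) * M.h)) • M.b (m + k)))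
  refine (h1.uniq (h2.congr ?_ rfl)).trans ?_
  · intro n
    obtain ⟨c, hc⟩ := M.nB_eq n (m - 1 - n)
    have e : M.nB n (m - 1 - n) * M.b k - M.b k * M.nB n (m - 1 - n)
       = (if n + k + 1 = 0 then ((2 * n + 1 : ℤ) : A) * M.h else 0) • M.b (m - 1 - n)
        + (if (m - 1 - n) + k + 1 = 0 then ((2 * (m - 1 - n) + 1 : ℤ) : A) * M.h else 0) • M.b n := by
      rw [hc, add_mul, mul_add, mul_assoc, M.bb (m - 1 - n) k, mul_add, ← mul_assoc, M.bb n k]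
      simp only [add_mul, smul_mul_assoc, mul_smul_comm, one_mul, mul_one, mul_assoc]
      module
    rw [e]
    congr 1
    · by_cases h : n = -k-1
      · subst h
        rw [if_pos (by ring), if_pos rfl]
        congr 2
        · push_cast; ring
        · ring
      · rw [if_neg (by omega), if_neg h, zero_smul]
    · by_cases h : n = m + k
      · subst h
        rw [if_pos (by ring), if_pos rfl]
        congr 2
        push_cast; ring
      · rw [if_neg (by omega), if_neg h, zero_smul]
  · rw [← add_smul]; congr 1
    linear_combination (-((2 * k + 1 : ℤ) : A)) * M.h2

theorem LF_p (m k : ℤ) : M.LF m * M.p k - M.p k * M.LF m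
    = -(((2 * k + m + 1 : ℤ) : A)) • M.p (m + k) := by
  have h1 := ((M.hLF m).mul_right (M.p k)).sub ((M.hLF m).mul_left (M.p k))
  have h2 := (HSm.single (-k-1-m) ((-(((2 * k + m + 1 : ℤ) : A) * M.h)) • M.p (m + k))).add
    (HSm.single k ((-(((2 * k + m + 1 : ℤ) : A) * M.h)) • M.p (m + k)))
  refine (h1.uniq (h2.congr ?_ rfl)).trans ?_
  · intro n
    obtain ⟨c, hc⟩ := M.nF_eq (-n-1) (m + n)
    have e : M.nF (-n-1) (m + n) * M.p k - M.p k * M.nF (-n-1) (m + n)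
       = (if (m + n) + k + 1 = 0 then (1 : A) else 0) • M.p (-n-1)
        - (if (-n-1) + k + 1 = 0 then (1:A) else 0) • M.p (m + n) := by
      have e2 : M.p k * (M.p (-n-1) * M.p (m + n)) = - (M.p (-n-1) * (M.p k * M.p (m + n)))
          + (if (-n-1) + k + 1 = 0 then (1:A) else 0) • M.p (m + n) := by
        rw [← mul_assoc, M.pp k (-n-1), add_mul, add_comm k (-n-1)]
        simp only [smul_mul_assoc, one_mul, neg_mul, mul_assoc]
      rw [hc, add_mul, mul_add, e2, mul_assoc, M.pp (m + n) k, mul_add]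
      simp only [smul_mul_assoc, mul_smul_comm, one_mul, mul_one, mul_neg]
      module
    rw [smul_mul_assoc, mul_smul_comm, ← smul_sub, e, smul_sub, sub_eq_add_neg]
    congr 1
    · by_cases h : n = -k-1-m
      · subst h
        rw [if_pos (by ring), if_pos rfl, one_smul]
        congr 2
        · push_cast; ring
        · ring
      · rw [if_neg (by omega), if_neg h, zero_smul, smul_zero]
    · by_cases h : n = k
      · subst h
        rw [if_pos (by ring), if_pos rfl, one_smul, neg_smul]
      · rw [if_neg (by omega), if_neg h, zero_smul, smul_zero, neg_zero]
  · rw [← add_smul]; congr 1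
    linear_combination (-((2 * k + m + 1 : ℤ) : A)) * M.h2

theorem HSm_zero {S : Module.End A V} (h : HSm (fun _ => 0) S) : S = 0 := by
  ext v; rw [← (h v).2]; simp

theorem LF_b (m k : ℤ) : M.LF m * M.b k - M.b k * M.LF m = 0 := by
  have h1 := ((M.hLF m).mul_right (M.b k)).sub ((M.hLF m).mul_left (M.b k))
  refine HSm_zero (h1.congr ?_ rfl)
  intro n
  obtain ⟨c, hc⟩ := M.nF_eq (-n-1) (m + n)
  rw [hc, smul_mul_assoc, mul_smul_comm, ← smul_sub, add_mul, mul_add, mul_assoc, M.pb, ← mul_assoc,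
    M.pb, mul_assoc]
  simp

theorem LB_p (m k : ℤ) : M.LB m * M.p k - M.p k * M.LB m = 0 := by
  have h1 := ((M.hLB m).mul_right (M.p k)).sub ((M.hLB m).mul_left (M.p k))
  refine HSm_zero (h1.congr ?_ rfl)
  intro n
  obtain ⟨c, hc⟩ := M.nB_eq n (m - 1 - n)
  rw [hc, add_mul, mul_add, mul_assoc, ← M.pb, ← mul_assoc, ← M.pb, mul_assoc]
  simp

theorem L_b (m k : ℤ) : M.L m * M.b k = M.b k * M.L m
    - (((2 * k + 1 : ℤ) : A) * M.h) • M.b (m + k) := by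
  have h1 := M.LB_b m k
  have h2 := M.LF_b m k
  rw [sub_eq_iff_eq_add] at h1 h2
  rw [L, smul_mul_assoc, mul_smul_comm, add_mul, mul_add, h1, h2]
  module

theorem L_p (m k : ℤ) : M.L m * M.p k = M.p k * M.L m
    - (((2 * k + m + 1 : ℤ) : A) * M.h) • M.p (m + k) := by
  have h1 := M.LF_p m k
  have h2 := M.LB_p m k
  rw [sub_eq_iff_eq_add] at h1 h2
  rw [L, smul_mul_assoc, mul_smul_comm, add_mul, mul_add, h1, h2]
  module

theorem G_b (m k : ℤ) : M.G m * M.b k = M.b k * M.G m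
    - (((2 * k + 1 : ℤ) : A) * M.h) • M.p (m + k) := by
  have h1 := ((M.hG m).mul_right (M.b k)).sub ((M.hG m).mul_left (M.b k))
  have h2 := (HSm.single (m+k) ((-(((2 * k + 1 : ℤ) : A) * M.h)) • M.p (m + k)))
  have := h1.uniq (h2.congr ?_ rfl)
  · rw [sub_eq_iff_eq_add] at this; rw [this]; module
  · intro n
    rw [mul_assoc, M.pb, ← mul_assoc, M.bb]
    simp only [add_mul, smul_mul_assoc, one_mul, mul_assoc, add_sub_cancel_left]
    by_cases h : n = m + k
    · subst h
      rw [if_pos (by ring), if_pos rfl]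
      congr 1
      push_cast; ring
    · rw [if_neg (by omega), if_neg h, zero_smul]

theorem G_p (m k : ℤ) : M.G m * M.p k = - (M.p k * M.G m) + M.b (m + k) := by
  have h1 := ((M.hG m).mul_right (M.p k)).add ((M.hG m).mul_left (M.p k))
  have h2 := (HSm.single (-k-1) (M.b (m + k)))
  have := h1.uniq (h2.congr ?_ rfl)
  · rw [← this]; abel
  · intro n
    rw [mul_assoc (M.b _), ← mul_assoc (M.p k), M.pb, M.pp n k]
    simp only [mul_add, mul_smul_comm, mul_one, mul_assoc, mul_neg]
    by_cases h : n = -k-1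
    · subst h
      rw [if_pos (by ring), if_pos rfl, one_smul, show m - 1 - (-k-1) = m + k by ring]
      abel
    · rw [if_neg (by omega), if_neg h, zero_smul]; abel

theorem L_G (m n : ℤ) : M.L m * M.G n = M.G n * M.L m
    + (((m - 2 * n : ℤ) : A) * M.h) • M.G (m + n) := by
  have h1 := ((M.hG n).mul_left (M.L m)).sub ((M.hG n).mul_right (M.L m))
  -- second family, via combining
  have h3 : HSm (fun k => (((2 * k + m + 1 : ℤ) : A) * M.h) • (M.b (n - 1 - k) * M.p (m + k))
      - (((2 * (k-m) + m + 1 : ℤ) : A) * M.h) • (M.b (m + n - 1 - k) * M.p k)) 0 := by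
    obtain ⟨S, hS⟩ := HSm.exists' (fun k => (((2 * (k-m) + m + 1 : ℤ) : A) * M.h) •
      (M.b (m + n - 1 - k) * M.p k)) (fun v => (M.G_lf (m + n) v).subset (fun k hk => by
        simp only [Function.mem_support, LinearMap.smul_apply] at hk ⊢
        intro h0; exact hk (by rw [h0, smul_zero])))
    refine ((hS.reindex (Equiv.addLeft m)).sub hS).congr (fun k => ?_) (sub_self S).symm
    simp only [Equiv.coe_addLeft]
    congr 4
    · ring_nf
    · ring
  have h4 := h1.add h3
  have h5 := (M.hG (m + n)).smul (((m - 2 * n : ℤ) : A) * M.h)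
  have := h4.uniq (h5.congr ?_ rfl)
  · rw [← this]; abel
  · intro k
    rw [← mul_assoc, M.L_b, sub_mul, mul_assoc, M.L_p, mul_sub, smul_mul_assoc, mul_smul_comm,
      show m + (n - 1 - k) = m + n - 1 - k by ring, mul_assoc]
    push_cast
    module

theorem G_G_aux (m n : ℤ) (hm : 0 ≤ m) (hn : 0 ≤ n) : HSm (fun k => M.b (n - 1 - k) * M.b (m + k)
    - (((2 * (n - 1 - k) + 1 : ℤ) : A) * M.h) • (M.p (m + n - 1 - k) * M.p k))
    (M.LB (m + n) + M.LF (m + n)) := by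
  by_cases h0 : m + n = 0
  · obtain rfl : m = 0 := by omega
    obtain rfl : n = 0 := by omega
    refine ((M.hLB _).add (M.hLF _)).congr (fun k => ?_) rfl
    have i1 : (0 : ℤ) - 1 - k = -k - 1 := by ring
    simp only [add_zero, zero_add, i1]
    unfold nB nF
    by_cases hk : 0 ≤ k
    · rw [if_neg (by omega), if_pos (by omega)]
      push_cast
      module
    · rw [if_pos (by omega), if_neg (by omega), M.bb (-k-1) k, M.pp (-k-1) k, if_pos (by ring),
        if_pos (by ring)]
      push_cast
      module
  · have hB : HSm (fun k => M.b (n - 1 - k) * M.b (m + k)) (M.LB (m + n)) := by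
      refine ((M.hLB (m + n)).reindex (Equiv.subLeft (n - 1))).congr (fun k => ?_) rfl
      simp only [Equiv.subLeft_apply]
      rw [show m + n - 1 - (n - 1 - k) = m + k by ring]
      unfold nB
      split_ifs
      · rfl
      · rw [M.bb, if_neg (by omega)]; simp
    have hnF : ∀ k, M.nF (m + n - 1 - k) k = M.p (m + n - 1 - k) * M.p k := by
      intro k
      unfold nF
      split_ifs
      · rfl
      · rw [M.pp k, if_neg (by omega)]; simp
    have hF : HSm (fun k => (((2 * k - (m + n) + 1 : ℤ) : A) * M.h) •
        (M.p (m + n - 1 - k) * M.p k)) (M.LF (m + n)) := by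
      refine ((M.hLF (m + n)).reindex (Equiv.subRight (m + n))).congr (fun k => ?_) rfl
      simp only [Equiv.subRight_apply]
      rw [← hnF, show -(k - (m + n)) - 1 = m + n - 1 - k by ring,
        show m + n + (k - (m + n)) = k by ring,
        show 2 * (k - (m + n)) + (m + n) + 1 = 2 * k - (m + n) + 1 by ring]
    have h0 : HSm (fun k => M.p (m + n - 1 - k) * M.p k) 0 := by
      obtain ⟨S, hS⟩ := HSm.exists' (fun k => M.p (m + n - 1 - k) * M.p k) (by
        intro v
        have h := (M.nF_lf (m + n) (fun _ => 1) v).preimage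
          (f := fun k => k - (m + n)) (sub_left_injective.injOn)
        refine h.subset fun k hk => ?_
        simp only [Set.mem_preimage, Function.mem_support, one_smul] at hk ⊢
        rwa [show -(k - (m + n)) - 1 = m + n - 1 - k by ring,
          show m + n + (k - (m + n)) = k by ring, hnF])
      have : -S = S := hS.neg.uniq ((hS.reindex (Equiv.subLeft (m + n - 1))).congr (fun k => by
        simp only [Equiv.subLeft_apply]
        rw [show m + n - 1 - (m + n - 1 - k) = k by ring, M.pp k, if_neg (by omega)]; simp) rfl)
      have h2 : S = 0 := by
        rw [← M.half_add S]
        nth_rw 1 [← this]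
        simp
      rwa [h2] at hS
    refine ((hB.add hF).add (h0.smul (((m - n : ℤ) : A) * M.h))).congr (fun k => ?_) (by simp)
    push_cast
    module

theorem G_G (m n : ℤ) (hm : 0 ≤ m) (hn : 0 ≤ n) :
    M.G m * M.G n + M.G n * M.G m = (2 : A) • M.L (m + n) := by
  have h1 := ((M.hG n).mul_left (M.G m)).add ((M.hG n).mul_right (M.G m))
  rw [h1.uniq ((M.G_G_aux m n hm hn).congr ?_ rfl), L, smul_smul, M.h2, one_smul]
  intro k
  rw [← mul_assoc, M.G_b, sub_mul, mul_assoc, M.G_p, smul_mul_assoc, mul_add, mul_neg, mul_assoc,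
    show m + (n - 1 - k) = m + n - 1 - k by ring]
  abel

theorem L_L (m n : ℤ) (hm : 0 ≤ m) (hn : 0 ≤ n) :
    M.L m * M.L n = M.L n * M.L m + ((m - n : ℤ) : A) • M.L (m + n) := by
  have key : (2 : A) • (M.L m * M.L n - M.L n * M.L m) = (2 : A) • (((m - n : ℤ) : A) • M.L (m + n)) := by
    have g0 := M.G_G 0 n le_rfl hn
    have g1 := M.G_G m n hm hn
    have g2 := M.G_G 0 (m + n) le_rfl (by omega)
    have l0 := M.L_G m 0
    have l1 := M.L_G m n
    rw [zero_add] at g0 g2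
    rw [add_zero] at l0
    have e1 : (2 : A) • (M.L m * M.L n - M.L n * M.L m) =
      M.L m * (M.G 0 * M.G n + M.G n * M.G 0) - (M.G 0 * M.G n + M.G n * M.G 0) * M.L m := by
      rw [g0]; simp only [mul_smul_comm, smul_mul_assoc, smul_sub]
    have e2 : M.L m * (M.G 0 * M.G n + M.G n * M.G 0) - (M.G 0 * M.G n + M.G n * M.G 0) * M.L m
      = (((m - 2 * 0 : ℤ) : A) * M.h) • (M.G m * M.G n + M.G n * M.G m)
        + (((m - 2 * n : ℤ) : A) * M.h) • (M.G 0 * M.G (m + n) + M.G (m + n) * M.G 0) := by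
      rw [mul_add, ← mul_assoc, ← mul_assoc, l0, l1, add_mul, add_mul, mul_assoc, mul_assoc, l0, l1]
      simp only [mul_add, add_mul, mul_smul_comm, smul_mul_assoc, mul_assoc]
      module
    rw [e1, e2, g1, g2]
    simp only [smul_smul, ← add_smul]
    congr 1
    push_cast
    linear_combination (2 * (m : A) - 2 * n) * M.h2
  have half : ∀ X : Module.End A V, M.h • ((2 : A) • X) = X := fun X => by
    rw [smul_smul, mul_comm, M.h2, one_smul]
  have k2 := congrArg (fun X => M.h • X) key
  simp only [half] at k2
  rw [← k2]; abel

/-- the abstract even operators -/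
def Hq (s t c : A) (N i : ℤ) : Module.End A V :=
  t • (s • M.b (i - 1) + M.L (i + N - 1) + c • 1)
/-- the abstract odd operators -/
def Fq (s t : A) (N i : ℤ) : Module.End A V := t • (s • M.p (i - 1) + M.G (i + N - 1))

theorem Hq_apply (s t c : A) (N i : ℤ) (v : V) : M.Hq s t c N i v =
    t • (s • M.b (i - 1) v + M.h • (M.LB (i + N - 1) v + M.LF (i + N - 1) v) + c • v) := rfl
theorem Fq_apply (s t : A) (N i : ℤ) (v : V) : M.Fq s t N i v =
    t • (s • M.p (i - 1) v + M.G (i + N - 1) v) := rfl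

end FockModes
end Abstract

section Concrete

theorem pderiv_comm8 {σ A : Type*} [CommRing A] (i j : σ) (p : MvPolynomial σ A) :
    MvPolynomial.pderiv i (MvPolynomial.pderiv j p) =
      MvPolynomial.pderiv j (MvPolynomial.pderiv i p) := by
  classical
  have h : ⁅MvPolynomial.pderiv (R := A) i, MvPolynomial.pderiv (R := A) j⁆ = 0 := by
    apply MvPolynomial.derivation_ext
    intro k
    rw [Derivation.commutator_apply, MvPolynomial.pderiv_X, MvPolynomial.pderiv_X]
    simp only [Pi.single_apply, Derivation.coe_zero, Pi.zero_apply]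
    split_ifs <;> simp
  have h2 := congrArg (fun d => d p) h
  simp only [Derivation.commutator_apply] at h2
  exact sub_eq_zero.mp h2

/-- the positive integer underlying an integer -/
def pn8 (a : ℤ) (h : 1 ≤ a) : ℕ+ := ⟨a.toNat, by omega⟩

theorem pn8_coe (a : ℤ) (h : 1 ≤ a) : ((pn8 a h : ℕ) : ℤ) = a := by
  have : (pn8 a h : ℕ) = a.toNat := rfl
  omega

theorem pn8_inj (a b : ℤ) (ha : 1 ≤ a) (hb : 1 ≤ b) : pn8 a ha = pn8 b hb ↔ a = b := by
  constructor
  · intro h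
    rw [← pn8_coe a ha, h, pn8_coe]
  · rintro rfl; rfl

/-- derivative on the even factor -/
def dXE (a : ℕ+) : Module.End (R K) (Pev K) := (MvPolynomial.pderiv a).toLinearMap
/-- multiplication on the even factor -/
def mXE (a : ℕ+) : Module.End (R K) (Pev K) := LinearMap.mulLeft (R K) (MvPolynomial.X a)
/-- derivative on the odd factor -/
def dTO (a : ℕ+) : Module.End (R K) (Podd K) := CliffordAlgebra.contractLeft (Finsupp.lapply a)
/-- multiplication on the odd factor -/
def mTO (a : ℕ+) : Module.End (R K) (Podd K) :=
  LinearMap.mulLeft (R K) (ExteriorAlgebra.ι (R K) (Finsupp.single a 1))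

theorem dXE_apply (a : ℕ+) (p : Pev K) : dXE K a p = MvPolynomial.pderiv a p := rfl
theorem mXE_apply (a : ℕ+) (p : Pev K) : mXE K a p = MvPolynomial.X a * p := rfl
theorem mTO_apply (a : ℕ+) (p : Podd K) :
    mTO K a p = ExteriorAlgebra.ι (R K) (Finsupp.single a 1) * p := rfl

theorem dXE_comm (a b : ℕ+) : dXE K a * dXE K b = dXE K b * dXE K a :=
  LinearMap.ext fun p => pderiv_comm8 a b p

theorem mXE_comm (a b : ℕ+) : mXE K a * mXE K b = mXE K b * mXE K a :=
  LinearMap.ext fun p => mul_left_comm _ _ _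

theorem dXE_mXE (a b : ℕ+) : dXE K a * mXE K b = mXE K b * dXE K a +
    (if a = b then (1 : R K) else 0) • 1 := by
  classical
  refine LinearMap.ext fun p => ?_
  rw [LinearMap.add_apply, Module.End.mul_apply, Module.End.mul_apply, LinearMap.smul_apply,
    Module.End.one_apply, dXE_apply, dXE_apply, mXE_apply, mXE_apply, Derivation.leibniz,
    MvPolynomial.pderiv_X, Pi.single_apply]
  by_cases h : a = b
  · subst h
    simp
  · rw [if_neg (fun h' => h h'.symm), if_neg h]
    simp

theorem dTO_comm (a b : ℕ+) : dTO K a * dTO K b = -(dTO K b * dTO K a) :=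
  LinearMap.ext fun p => CliffordAlgebra.contractLeft_comm _ _ p

theorem mTO_comm (a b : ℕ+) : mTO K a * mTO K b = -(mTO K b * mTO K a) := by
  refine LinearMap.ext fun p => ?_
  rw [LinearMap.neg_apply, Module.End.mul_apply, Module.End.mul_apply]
  simp only [mTO_apply]
  rw [← mul_assoc, ← mul_assoc, ← neg_mul,
      eq_neg_of_add_eq_zero_left (ExteriorAlgebra.ι_add_mul_swap _ _)]

theorem dTO_ι_mul (a : ℕ+) (m : ℕ+ →₀ R K) (p : Podd K) :
    dTO K a (ExteriorAlgebra.ι (R K) m * p) =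
      m a • p - ExteriorAlgebra.ι (R K) m * dTO K a p :=
  CliffordAlgebra.contractLeft_ι_mul _ _ _

theorem dTO_mTO (a b : ℕ+) : dTO K a * mTO K b = -(mTO K b * dTO K a) +
    (if a = b then (1 : R K) else 0) • 1 := by
  classical
  refine LinearMap.ext fun p => ?_
  rw [LinearMap.add_apply, LinearMap.neg_apply, Module.End.mul_apply, Module.End.mul_apply,
    LinearMap.smul_apply, Module.End.one_apply, mTO_apply, mTO_apply, dTO_ι_mul,
    Finsupp.single_apply]
  by_cases h : a = b
  · subst h
    rw [if_pos rfl]; abel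
  · rw [if_neg (fun h' => h h'.symm), if_neg h]; abel

/-- boson modes on the even factor -/
def betaE (n : ℤ) : Module.End (R K) (Pev K) :=
  if h : 0 ≤ n then (LaurentPolynomial.T 1 : R K) • dXE K (pn8 (n + 1) (by omega))
  else ((((-2 * n - 1 : ℤ) : R K) * cs K (2 : K)⁻¹) * LaurentPolynomial.T (-1)) •
      mXE K (pn8 (-n) (by omega))

/-- fermion modes on the odd factor -/
def phiO (n : ℤ) : Module.End (R K) (Podd K) :=
  if h : 0 ≤ n then (LaurentPolynomial.T 1 : R K) • dTO K (pn8 (n + 1) (by omega))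
  else (LaurentPolynomial.T (-1) : R K) • mTO K (pn8 (-n) (by omega))

theorem T11 : (LaurentPolynomial.T 1 : R K) * LaurentPolynomial.T (-1) = 1 := by
  rw [← LaurentPolynomial.T_add, add_neg_cancel, LaurentPolynomial.T_zero]

theorem cs2 : (2 : R K) * cs K (2 : K)⁻¹ = 1 := by
  have : (2 : R K) = LaurentPolynomial.C (2 : K) := (map_ofNat LaurentPolynomial.C 2).symm
  rw [this, cs, ← map_mul, mul_inv_cancel₀ two_ne_zero, map_one]

theorem betaE_comm_aux (n m : ℤ) (hn : 0 ≤ n) (hm : ¬ 0 ≤ m) :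
    betaE K n * betaE K m = betaE K m * betaE K n +
      (if n + m + 1 = 0 then ((2 * n + 1 : ℤ) : R K) * cs K (2 : K)⁻¹ else 0) • 1 := by
  rw [betaE, betaE, dif_pos hn, dif_neg hm, smul_mul_smul_comm, smul_mul_smul_comm, dXE_mXE,
    smul_add, mul_comm (LaurentPolynomial.T 1 : R K), smul_smul]
  congr 2
  by_cases h : n + m + 1 = 0
  · rw [if_pos h, if_pos ((pn8_inj _ _ _ _).2 (by omega))]
    obtain rfl : m = -n-1 := by omega
    push_cast
    linear_combination ((2 * (n : R K) + 1) * cs K (2 : K)⁻¹) * T11 K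
  · rw [if_neg h, if_neg (fun h' => h (by have := (pn8_inj _ _ _ _).1 h'; omega)), mul_zero]

theorem betaE_comm (n m : ℤ) :
    betaE K n * betaE K m = betaE K m * betaE K n +
      (if n + m + 1 = 0 then ((2 * n + 1 : ℤ) : R K) * cs K (2 : K)⁻¹ else 0) • 1 := by
  by_cases hn : 0 ≤ n <;> by_cases hm : 0 ≤ m
  · rw [if_neg (by omega), zero_smul, add_zero, betaE, betaE, dif_pos hn, dif_pos hm,
      smul_mul_smul_comm, smul_mul_smul_comm, dXE_comm]
  · exact betaE_comm_aux K n m hn hm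
  · rw [betaE_comm_aux K m n hm hn, add_assoc, ← add_smul]
    by_cases h : n + m + 1 = 0
    · obtain rfl : m = -n-1 := by omega
      rw [if_pos (by ring), if_pos (by ring)]
      push_cast
      module
    · rw [if_neg (by omega), if_neg h, add_zero, zero_smul, add_zero]
  · rw [if_neg (by omega), zero_smul, add_zero, betaE, betaE, dif_neg hn, dif_neg hm,
      smul_mul_smul_comm, smul_mul_smul_comm, mXE_comm, mul_comm (_ * _ * _)]

theorem phiO_comm_aux (n m : ℤ) (hn : 0 ≤ n) (hm : ¬ 0 ≤ m) :
    phiO K n * phiO K m = -(phiO K m * phiO K n) +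
      (if n + m + 1 = 0 then (1 : R K) else 0) • 1 := by
  rw [phiO, phiO, dif_pos hn, dif_neg hm, smul_mul_smul_comm, smul_mul_smul_comm, dTO_mTO,
    smul_add, mul_comm (LaurentPolynomial.T (-1) : R K), T11, one_smul, one_smul, one_smul]
  congr 2
  by_cases h : n + m + 1 = 0
  · rw [if_pos h, if_pos ((pn8_inj _ _ _ _).2 (by omega))]
  · rw [if_neg h, if_neg (fun h' => h (by have := (pn8_inj _ _ _ _).1 h'; omega))]

theorem phiO_comm (n m : ℤ) :
    phiO K n * phiO K m = -(phiO K m * phiO K n) +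
      (if n + m + 1 = 0 then (1 : R K) else 0) • 1 := by
  by_cases hn : 0 ≤ n <;> by_cases hm : 0 ≤ m
  · rw [if_neg (by omega), zero_smul, add_zero, phiO, phiO, dif_pos hn, dif_pos hm,
      smul_mul_smul_comm, smul_mul_smul_comm, dTO_comm, smul_neg]
  · exact phiO_comm_aux K n m hn hm
  · rw [phiO_comm_aux K m n hm hn, add_comm m n]
    abel
  · rw [if_neg (by omega), zero_smul, add_zero, phiO, phiO, dif_neg hn, dif_neg hm,
      smul_mul_smul_comm, smul_mul_smul_comm, mTO_comm, smul_neg]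

theorem betaE_lf (p : Pev K) : ∃ B : ℤ, 0 ≤ B ∧ ∀ n, B ≤ n → betaE K n p = 0 := by
  refine ⟨((∑ a ∈ p.vars, (a : ℕ) : ℕ) : ℤ), by omega, fun n hn => ?_⟩
  rw [betaE, dif_pos (by omega), LinearMap.smul_apply, dXE_apply,
    MvPolynomial.pderiv_eq_zero_of_notMem_vars, smul_zero]
  intro hmem
  have := Finset.single_le_sum (f := fun a : ℕ+ => (a : ℕ)) (fun _ _ => Nat.zero_le _) hmem
  have h2 := pn8_coe (n + 1) (by omega)
  try simp only at this
  omega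

theorem phiO_lf (q : Podd K) : ∃ B : ℤ, 0 ≤ B ∧ ∀ n, B ≤ n → phiO K n q = 0 := by
  induction q using CliffordAlgebra.left_induction with
  | algebraMap r =>
    refine ⟨0, le_rfl, fun n hn => ?_⟩
    rw [phiO, dif_pos hn, LinearMap.smul_apply, dTO, CliffordAlgebra.contractLeft_algebraMap,
      smul_zero]
  | add x y hx hy =>
    obtain ⟨B, hB, h1⟩ := hx
    obtain ⟨C, hC, h2⟩ := hy
    refine ⟨B + C, by omega, fun n hn => ?_⟩
    rw [map_add, h1 n (by omega), h2 n (by omega), add_zero]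
  | ι_mul x m hx =>
    obtain ⟨B, hB, h1⟩ := hx
    refine ⟨B + ((∑ a ∈ m.support, (a : ℕ) : ℕ) : ℤ), by omega, fun n hn => ?_⟩
    have h3 := h1 n (by omega)
    rw [phiO, dif_pos (by omega), LinearMap.smul_apply] at h3 ⊢
    have h4 := dTO_ι_mul K (pn8 (n + 1) (by omega)) m x
    have : m (pn8 (n + 1) (by omega)) = 0 := by
      rw [← Finsupp.notMem_support_iff]
      intro hmem
      have := Finset.single_le_sum (f := fun a : ℕ+ => (a : ℕ)) (fun _ _ => Nat.zero_le _) hmem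
      have h2 := pn8_coe (n + 1) (by omega)
      try simp only at this
      omega
    rw [this, zero_smul, zero_sub] at h4
    refine (congrArg (fun z => (LaurentPolynomial.T 1 : R K) • z) h4).trans ?_
    rw [smul_neg, ← mul_smul_comm, h3, mul_zero, neg_zero]

/-- the concrete modes -/
def modes8 : FockModes (R K) (SuperSpace K) where
  b n := LinearMap.rTensor (Podd K) (betaE K n)
  p n := LinearMap.lTensor (Pev K) (phiO K n)
  h := cs K (2 : K)⁻¹
  h2 := cs2 K
  bb n m := by
    rw [← LinearMap.rTensor_mul, ← LinearMap.rTensor_mul, betaE_comm, LinearMap.rTensor_add,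
      LinearMap.rTensor_smul]
    congr 2
    exact LinearMap.rTensor_id _ _
  pp n m := by
    rw [← LinearMap.lTensor_mul, ← LinearMap.lTensor_mul, phiO_comm, LinearMap.lTensor_add,
      LinearMap.lTensor_smul, LinearMap.lTensor_neg]
    congr 2
    exact LinearMap.lTensor_id _ _
  pb n m := by
    rw [Module.End.mul_eq_comp, Module.End.mul_eq_comp, LinearMap.lTensor_comp_rTensor,
      LinearMap.rTensor_comp_lTensor]
  lf v := by
    induction v using TensorProduct.induction_on with
    | zero => exact ⟨0, fun n _ => by simp⟩
    | tmul x y =>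
      obtain ⟨B, hB, h1⟩ := betaE_lf K x
      obtain ⟨C, hC, h2⟩ := phiO_lf K y
      refine ⟨B + C, fun n hn => ?_⟩
      rw [LinearMap.rTensor_tmul, LinearMap.lTensor_tmul, h1 n (by omega), h2 n (by omega)]
      simp
    | add x y hx hy =>
      obtain ⟨B, h1⟩ := hx
      obtain ⟨C, h2⟩ := hy
      refine ⟨max B C, fun n hn => ?_⟩
      have h1 := h1 n (by omega)
      have h2 := h2 n (by omega)
      rw [map_add, map_add, h1.1, h1.2, h2.1, h2.2]
      simp

theorem bos_eq (n : ℤ) (v : SuperSpace K) : bos K n v = (modes8 K).b n v := by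
  change _ = LinearMap.rTensor (Podd K) (betaE K n) v
  by_cases h : 0 ≤ n
  · rw [bos, betaE, dif_pos h, dif_pos h, LinearMap.rTensor_smul]; rfl
  · rw [bos, betaE, dif_neg h, dif_neg h, LinearMap.rTensor_smul]; rfl

theorem fer_eq (n : ℤ) (v : SuperSpace K) : fer K n v = (modes8 K).p n v := by
  change _ = LinearMap.lTensor (Pev K) (phiO K n) v
  by_cases h : 0 ≤ n
  · rw [fer, phiO, dif_pos h, dif_pos h, LinearMap.lTensor_smul]; rfl
  · rw [fer, phiO, dif_neg h, dif_neg h, LinearMap.lTensor_smul]; rfl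

theorem nb_eq (n m : ℤ) (v : SuperSpace K) : nb K n m v = (modes8 K).nB n m v := by
  unfold nb FockModes.nB
  split_ifs <;> simp only [bos_eq, Module.End.mul_apply]

theorem nf_eq (n m : ℤ) (v : SuperSpace K) : nf K n m v = (modes8 K).nF n m v := by
  unfold nf FockModes.nF
  split_ifs <;> simp only [fer_eq] <;> rfl

theorem dXi_eq (i : ℤ) (hi : 1 ≤ i) (v : SuperSpace K) :
    dXi K i v = (LaurentPolynomial.T (-1) : R K) • (modes8 K).b (i - 1) v := by
  rw [← bos_eq, dXi, bos, dif_pos hi, dif_pos (by omega)]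
  simp only [smul_smul, mul_comm _ (LaurentPolynomial.T 1 : R K), T11, one_smul, sub_add_cancel]

theorem dTi_eq (i : ℤ) (hi : 1 ≤ i) (v : SuperSpace K) :
    dTi K i v = (LaurentPolynomial.T (-1) : R K) • (modes8 K).p (i - 1) v := by
  rw [← fer_eq, dTi, fer, dif_pos hi, dif_pos (by omega)]
  simp only [smul_smul, mul_comm _ (LaurentPolynomial.T 1 : R K), T11, one_smul, sub_add_cancel]

theorem Hop_eq (N : ℤ) (D : ℤ → K) (i : ℤ) (hi : 1 ≤ i) (v : SuperSpace K) :
    Hop K N D i v = (modes8 K).Hq (LaurentPolynomial.T (-1)) (hb K)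
      (if i ≤ N then cs K (D i) else 0) N i v := by
  unfold Hop
  rw [dXi_eq K i hi]
  have h1 := ((modes8 K).hLB (i + N - 1) v).2
  have h2 := ((modes8 K).hLF (i + N - 1) v).2
  have e1 : (∑ᶠ n : ℤ, nb K n (i + N - 2 - n) v) = (modes8 K).LB (i + N - 1) v := by
    rw [← h1]
    refine finsum_congr fun n => ?_
    beta_reduce
    rw [nb_eq, show i + N - 1 - 1 - n = i + N - 2 - n by ring]
  have e2 : (∑ᶠ n : ℤ, (((2 * n + i + N : ℤ) : R K) * cs K (2 : K)⁻¹) •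
          nf K (-n - 1) (i + N - 1 + n) v) = (modes8 K).LF (i + N - 1) v := by
    rw [← h2]
    refine finsum_congr fun n => ?_
    beta_reduce
    rw [nf_eq, show 2 * n + (i + N - 1) + 1 = 2 * n + i + N by ring]
    rfl
  have e3 : (if i ≤ N then (hb K * cs K (D i)) • v else 0)
      = (hb K * (if i ≤ N then cs K (D i) else 0)) • v := by
    split_ifs
    · rfl
    · simp
  rw [e1, e2, e3, FockModes.Hq_apply, show (modes8 K).h = cs K (2 : K)⁻¹ from rfl]
  module

theorem Fop_eq (N : ℤ) (i : ℤ) (hi : 1 ≤ i) (v : SuperSpace K) :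
    Fop K N i v = (modes8 K).Fq (LaurentPolynomial.T (-1)) (hb K) N i v := by
  unfold Fop
  rw [dTi_eq K i hi]
  have h1 := ((modes8 K).hG (i + N - 1) v).2
  have e1 : (∑ᶠ n : ℤ, bos K (i + N - 2 - n) (fer K n v)) = (modes8 K).G (i + N - 1) v := by
    rw [← h1]
    refine finsum_congr fun n => ?_
    beta_reduce
    rw [bos_eq, fer_eq, show i + N - 1 - 1 - n = i + N - 2 - n by ring]
    rfl
  rw [e1, FockModes.Fq_apply, smul_add]

end Concrete

namespace FockModes
variable {A V : Type*} [CommRing A] [AddCommGroup V] [Module A V] (M : FockModes A V)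

theorem final_HH (s t c d : A) (N i j : ℤ) (hN : 0 ≤ N) (hi : 1 ≤ i) (hj : 1 ≤ j) :
    (t • (s • M.b (i - 1) + M.L (i + N - 1) + c • 1))
      * (t • (s • M.b (j - 1) + M.L (j + N - 1) + d • 1))
    - (t • (s • M.b (j - 1) + M.L (j + N - 1) + d • 1))
      * (t • (s • M.b (i - 1) + M.L (i + N - 1) + c • 1))
    = (t * ((i - j : ℤ) : A)) •
      (t • (s • M.b (i + j + N - 1 - 1) + M.L (i + j + N - 1 + N - 1) + (0 : A) • 1)) := by
  have e1 := M.L_L (i + N - 1) (j + N - 1) (by omega) (by omega)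
  have e2 := M.L_b (i + N - 1) (j - 1)
  have e3 := M.L_b (j + N - 1) (i - 1)
  have e4 := M.bb (i - 1) (j - 1)
  rw [if_neg (by omega)] at e4
  rw [show i + N - 1 + (j + N - 1) = i + j + N - 1 + N - 1 by ring] at e1
  rw [show i + N - 1 + (j - 1) = i + j + N - 1 - 1 by ring] at e2
  rw [show j + N - 1 + (i - 1) = i + j + N - 1 - 1 by ring] at e3
  simp only [mul_add, add_mul, smul_mul_assoc, mul_smul_comm, one_mul, mul_one, smul_add, smul_smul]
  rw [e1, e2, e3, e4]
  have h : M.b (i + j + N - 1 - 1) = (2 * M.h) • M.b (i + j + N - 1 - 1) := by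
    rw [M.h2, one_smul]
  push_cast
  linear_combination (norm := module) (t * t * s * (j - i)) • h

theorem final_HF (s t c : A) (N i j : ℤ) :
    (t • (s • M.b (i - 1) + M.L (i + N - 1) + c • 1))
      * (t • (s • M.p (j - 1) + M.G (j + N - 1)))
    - (t • (s • M.p (j - 1) + M.G (j + N - 1)))
      * (t • (s • M.b (i - 1) + M.L (i + N - 1) + c • 1))
    = (t * ((i - N + 1 - 2 * j : ℤ) : A) * M.h) •
      (t • (s • M.p (i + j + N - 1 - 1) + M.G (i + j + N - 1 + N - 1))) := by
  have e1 := M.L_G (i + N - 1) (j + N - 1)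
  have e2 := M.L_p (i + N - 1) (j - 1)
  have e3 := M.G_b (j + N - 1) (i - 1)
  have e4 := M.pb (j - 1) (i - 1)
  rw [show i + N - 1 + (j + N - 1) = i + j + N - 1 + N - 1 by ring] at e1
  rw [show i + N - 1 + (j - 1) = i + j + N - 1 - 1 by ring] at e2
  rw [show j + N - 1 + (i - 1) = i + j + N - 1 - 1 by ring] at e3
  simp only [mul_add, add_mul, smul_mul_assoc, mul_smul_comm, one_mul, mul_one, smul_add, smul_smul]
  rw [e1, e2, e3, e4]
  push_cast
  module

theorem final_FF (s t : A) (N i j : ℤ) (hN : 0 ≤ N) (hi : 1 ≤ i) (hj : 1 ≤ j) :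
    (t • (s • M.p (i - 1) + M.G (i + N - 1))) * (t • (s • M.p (j - 1) + M.G (j + N - 1)))
    + (t • (s • M.p (j - 1) + M.G (j + N - 1))) * (t • (s • M.p (i - 1) + M.G (i + N - 1)))
    = (2 * t) •
      (t • (s • M.b (i + j + N - 1 - 1) + M.L (i + j + N - 1 + N - 1) + (0 : A) • 1)) := by
  have e1 := M.G_G (i + N - 1) (j + N - 1) (by omega) (by omega)
  have e2 := M.G_p (i + N - 1) (j - 1)
  have e3 := M.G_p (j + N - 1) (i - 1)
  have e4 := M.pp (i - 1) (j - 1)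
  rw [if_neg (by omega)] at e4
  rw [show i + N - 1 + (j + N - 1) = i + j + N - 1 + N - 1 by ring] at e1
  rw [show i + N - 1 + (j - 1) = i + j + N - 1 - 1 by ring] at e2
  rw [show j + N - 1 + (i - 1) = i + j + N - 1 - 1 by ring] at e3
  rw [← eq_sub_iff_add_eq] at e1
  simp only [mul_add, add_mul, smul_mul_assoc, mul_smul_comm, one_mul, mul_one, smul_add, smul_smul]
  rw [e1, e2, e3, e4]
  module

theorem final_HH' (s t c d : A) (N i j : ℤ) (hN : 0 ≤ N) (hi : 1 ≤ i) (hj : 1 ≤ j) (v : V) :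
    M.Hq s t c N i (M.Hq s t d N j v) - M.Hq s t d N j (M.Hq s t c N i v)
      = (t * ((i - j : ℤ) : A)) • M.Hq s t 0 N (i + j + N - 1) v :=
  LinearMap.congr_fun (M.final_HH s t c d N i j hN hi hj) v

theorem final_HF' (s t c : A) (N i j : ℤ) (v : V) :
    M.Hq s t c N i (M.Fq s t N j v) - M.Fq s t N j (M.Hq s t c N i v)
      = (t * ((i - N + 1 - 2 * j : ℤ) : A) * M.h) • M.Fq s t N (i + j + N - 1) v :=
  LinearMap.congr_fun (M.final_HF s t c N i j) v

theorem final_FF' (s t : A) (N i j : ℤ) (hN : 0 ≤ N) (hi : 1 ≤ i) (hj : 1 ≤ j) (v : V) :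
    M.Fq s t N i (M.Fq s t N j v) + M.Fq s t N j (M.Fq s t N i v)
      = (2 * t) • M.Hq s t 0 N (i + j + N - 1) v :=
  LinearMap.congr_fun (M.final_FF s t N i j hN hi hj) v

end FockModes

/-- For `N ≥ 0` and scalars `D_1, …, D_N`, the operators `H_i`, `F_i`
(`i ∈ ℤ_{≥1}`) satisfy the Ramond super Virasoro relations
`[H_i, H_j] = ℏ(i−j) H_{i+j+N−1}`, `[H_i, F_j] = ℏ((i−N+1)/2 − j) F_{i+j+N−1}` and
`{F_i, F_j} = 2ℏ H_{i+j+N−1}`. -/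
theorem statement8 (N : ℤ) (hN : 0 ≤ N) (D : ℤ → K) :
    (∀ i j : ℤ, 1 ≤ i → 1 ≤ j → ∀ v : SuperSpace K,
      Hop K N D i (Hop K N D j v) - Hop K N D j (Hop K N D i v)
        = (hb K * ((i - j : ℤ) : R K)) • Hop K N D (i + j + N - 1) v) ∧
    (∀ i j : ℤ, 1 ≤ i → 1 ≤ j → ∀ v : SuperSpace K,
      Hop K N D i (Fop K N j v) - Fop K N j (Hop K N D i v)
        = (hb K * ((i - N + 1 - 2 * j : ℤ) : R K) * cs K (2 : K)⁻¹) •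
            Fop K N (i + j + N - 1) v) ∧
    (∀ i j : ℤ, 1 ≤ i → 1 ≤ j → ∀ v : SuperSpace K,
      Fop K N i (Fop K N j v) + Fop K N j (Fop K N i v)
        = (2 * hb K) • Hop K N D (i + j + N - 1) v) := by
  refine ⟨fun i j hi hj v => ?_, fun i j hi hj v => ?_, fun i j hi hj v => ?_⟩
  · rw [Hop_eq K N D i hi, Hop_eq K N D j hj, Hop_eq K N D j hj, Hop_eq K N D i hi,
      Hop_eq K N D (i + j + N - 1) (by omega), if_neg (show ¬ i + j + N - 1 ≤ N by omega)]
    exact ((modes8 K).final_HH' _ _ _ _ N i j hN hi hj v)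
  · rw [Fop_eq K N j hj, Hop_eq K N D i hi, Hop_eq K N D i hi, Fop_eq K N j hj,
      Fop_eq K N (i + j + N - 1) (by omega)]
    exact ((modes8 K).final_HF' _ _ _ N i j v)
  · rw [Fop_eq K N j hj, Fop_eq K N i hi, Fop_eq K N i hi, Fop_eq K N j hj,
      Hop_eq K N D (i + j + N - 1) (by omega), if_neg (show ¬ i + j + N - 1 ≤ N by omega)]
    exact ((modes8 K).final_FF' _ _ N i j hN hi hj v)

end
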